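/- arXiv:2502.20909 — 3 statements merged into one kernel-verified Lean document; each statement's English description precedes it below -/
import Mathlib

section
/- Let κ, υ, μ be real numbers with 0 ≤ κ, κ + υ ≤ 1, 3/4 ≤ υ ≤ 1, and 0 ≤ μ ≤ 1. Then (1-υ)·h(κ/(1-υ)) + κ·lg(μ/(1-υ)) + 1 - κ - υ ≤ 1.04 (where in the degenerate case υ = 1, so that κ = 0, all terms involving division by 1-υ are interpreted as 0). -/
/-- The binary entropy function (base 2), with the convention `0 · lg 0 = 0`
(note `Real.logb 2 0 = 0` in Mathlib). -/
noncomputable def binEnt (x : ℝ) : ℝ :=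
  -x * Real.logb 2 x - (1 - x) * Real.logb 2 (1 - x)

/-!
Entropy is at most `1`, so the entropy term is at most `1 - υ`. In the logarithmic term, `κ ≤ 1 - υ`
lets us enlarge `lg (μ / (1 - υ))` to `lg (μ / κ)`, and `κ · lg (μ / κ)` is maximal at `κ = μ / e`,
with value `μ / (e · ln 2)`. The constant `1.04` is then `2 · (1 / 4) + 0.54`.
-/

theorem binEnt_eq_binEntropy_div_log_two (x : ℝ) :
    binEnt x = Real.binEntropy x / Real.log 2 := by
  simp only [binEnt, Real.binEntropy, Real.logb, Real.log_inv]
  ring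

theorem binEnt_le_one (x : ℝ) : binEnt x ≤ 1 := by
  rw [binEnt_eq_binEntropy_div_log_two, div_le_one (Real.log_pos one_lt_two)]
  exact Real.binEntropy_le_log_two

theorem mul_log_div_le_mul_exp_neg_one {x y : ℝ} (hx : 0 ≤ x) (hy : 0 ≤ y) :
    x * Real.log (y / x) ≤ y * Real.exp (-1) := by
  rcases hx.eq_or_lt with rfl | x_pos
  · simpa using mul_nonneg hy (Real.exp_pos (-1)).le
  rcases hy.eq_or_lt with rfl | y_pos
  · simp
  have exp_neg_log : Real.exp (-Real.log (y / x)) = x / y := by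
    rw [Real.exp_neg, Real.exp_log (div_pos y_pos x_pos), inv_div]
  calc x * Real.log (y / x)
      = y * (Real.log (y / x) * Real.exp (-Real.log (y / x))) := by
        rw [exp_neg_log]
        field_simp
    _ ≤ y * Real.exp (-1) := by
        gcongr
        exact Real.mul_exp_neg_le_exp_neg_one _

theorem mul_log_div_le_mul_exp_neg_one_of_le {x y s : ℝ} (hx : 0 ≤ x) (hxs : x ≤ s)
    (hy : 0 ≤ y) : x * Real.log (y / s) ≤ y * Real.exp (-1) := by
  rcases hx.eq_or_lt with rfl | x_pos
  · simpa using mul_nonneg hy (Real.exp_pos (-1)).le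
  rcases hy.eq_or_lt with rfl | y_pos
  · simp
  have s_pos : 0 < s := x_pos.trans_le hxs
  calc x * Real.log (y / s) ≤ x * Real.log (y / x) := by gcongr
    _ ≤ y * Real.exp (-1) := mul_log_div_le_mul_exp_neg_one hx hy

theorem exp_neg_one_div_log_two_le : Real.exp (-1) / Real.log 2 ≤ 0.54 := by
  rw [div_le_iff₀ (Real.log_pos one_lt_two)]
  linarith [Real.exp_neg_one_lt_d9, Real.log_two_gt_d9]

theorem objective_le_of_upsilon_large_general {κ υ μ : ℝ}
    (hκ : 0 ≤ κ) (hκυ : κ + υ ≤ 1) (hμ : 0 ≤ μ) :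
    (1 - υ) * binEnt (κ / (1 - υ)) + κ * Real.logb 2 (μ / (1 - υ)) + 1 - κ - υ ≤
      2 * (1 - υ) - κ + μ * (Real.exp (-1) / Real.log 2) := by
  have entropy_term : (1 - υ) * binEnt (κ / (1 - υ)) ≤ 1 - υ :=
    mul_le_of_le_one_right (by linarith) (binEnt_le_one _)
  have log_term : κ * Real.logb 2 (μ / (1 - υ)) ≤ μ * (Real.exp (-1) / Real.log 2) := by
    rw [Real.logb, ← mul_div_assoc, ← mul_div_assoc]
    gcongr ?_ / _
    exact mul_log_div_le_mul_exp_neg_one_of_le hκ (by linarith) hμ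
  linarith

theorem objective_le_of_upsilon_large (κ υ μ : ℝ)
    (hκ : 0 ≤ κ) (hκυ : κ + υ ≤ 1) (hυ : 3 / 4 ≤ υ) (hυ1 : υ ≤ 1)
    (hμ0 : 0 ≤ μ) (hμ1 : μ ≤ 1) :
    (1 - υ) * binEnt (κ / (1 - υ)) + κ * Real.logb 2 (μ / (1 - υ)) + 1 - κ - υ ≤ 1.04 := by
  have log_bound : μ * (Real.exp (-1) / Real.log 2) ≤ 0.54 :=
    (mul_le_of_le_one_left (by positivity) hμ1).trans exp_neg_one_div_log_two_le
  linarith [objective_le_of_upsilon_large_general hκ hκυ hμ0]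
end

section
/- Let μ, μ', κ, κ', υ, υ' be real numbers satisfying: 0 ≤ μ ≤ 1, 0 ≤ μ' ≤ 1, 0 ≤ κ ≤ μ, 0 ≤ κ' ≤ μ', 0 ≤ υ, κ + υ ≤ 1, 0 ≤ υ', κ' + υ' ≤ 1, κ ≤ υ', κ' ≤ υ, and μ + μ' - υ - υ' ≤ 3/2. Then min{ (1-υ)·h(κ/(1-υ)) + κ·lg(μ/(1-υ)) + 1 - κ - υ , (1-υ')·h(κ'/(1-υ')) + κ'·lg(μ'/(1-υ')) + 1 - κ' - υ' } < 1.2992 (where in a degenerate case υ = 1, forcing κ = 0, the terms of the corresponding expression involving division by 1-υ are interpreted as 0, and similarly for υ' = 1). -/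
/-! With `s = 1 - υ`, each of the two expressions is `1 / log 2` times
`κ log (μ / κ) + (s - κ) log (2 s / (s - κ))`. Both summands have the form `x log (y / x)`, which is
concave and homogeneous, so its tangent plane along a ray `y = a x` is a linear upper bound. Using
the slope `a` for the first summand and `e` for the second, `log 2` times the sum of the two
expressions is at most `(κ + κ') (log a - 1) + (μ + μ') / a + (2 - υ - υ') (2 / e)`. For `a ≥ e`,
the constraints `κ + κ' ≤ υ + υ'` and `μ + μ' ≤ 3 / 2 + (υ + υ')` bound this by an affine function
of `υ + υ'`, which is nonincreasing if `log a - 1 + 1 / a ≤ 2 / e`, hence at most its value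
`3 / (2 a) + 4 / e` at `υ + υ' = 0`. The minimum is at most half the sum. -/

open Real

theorem logb_two_mul_log_two (x : ℝ) : logb 2 x * log 2 = log x :=
  div_mul_cancel₀ _ (log_pos one_lt_two).ne'

theorem binEnt_mul_log_two (x : ℝ) : binEnt x * log 2 = binEntropy x := by
  rw [binEnt, binEntropy, log_inv, log_inv]
  linear_combination -x * logb_two_mul_log_two x - (1 - x) * logb_two_mul_log_two (1 - x)

theorem mul_binEntropy_div (s x : ℝ) :
    s * binEntropy (x / s) = x * log (s / x) + (s - x) * log (s / (s - x)) := by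
  rcases eq_or_ne s 0 with rfl | hs
  · simp
  · rw [binEntropy, one_sub_div hs, inv_div, inv_div]
    field_simp

theorem mul_log_div_le_tangent {x y a : ℝ} (hx : 0 ≤ x) (hy : 0 ≤ y) (hyx : y = 0 → x = 0)
    (ha : 0 < a) : x * log (y / x) ≤ x * (log a - 1) + y / a := by
  rcases hx.eq_or_lt with rfl | hx
  · simpa using div_nonneg hy ha.le
  · have hy : 0 < y := hy.lt_of_ne' fun h ↦ hx.ne' (hyx h)
    have hlog : log (y / x) - log a ≤ y / x / a - 1 := by
      rw [← log_div (by positivity) ha.ne']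
      exact log_le_sub_one_of_pos (by positivity)
    calc x * log (y / x) ≤ x * (log a - 1 + y / x / a) := by gcongr; linarith
      _ = x * (log a - 1) + y / a := by field_simp

/-- The function of the counting parameters `μ`, `κ`, `υ` of cutpaths whose values at the unprimed
and at the primed parameters are the two expressions in the minimum. For `υ = 1` and `κ = 0` the
terms with a division by `1 - υ` vanish, because they are multiplied by `0`. -/
noncomputable def cutpathExponent (μ κ υ : ℝ) : ℝ :=
  (1 - υ) * binEnt (κ / (1 - υ)) + κ * logb 2 (μ / (1 - υ)) + 1 - κ - υ

section CutpathExponent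

variable {μ κ υ : ℝ}

theorem cutpathExponent_mul_log_two (hκ : 0 ≤ κ) (hκμ : κ ≤ μ) (hκυ : κ + υ ≤ 1) :
    cutpathExponent μ κ υ * log 2 =
      κ * log (μ / κ) + (1 - υ - κ) * log (2 * (1 - υ) / (1 - υ - κ)) := by
  have merge_κ : κ * log ((1 - υ) / κ) + κ * log (μ / (1 - υ)) = κ * log (μ / κ) := by
    rcases hκ.eq_or_lt with rfl | hκ
    · simp
    · have hs : 0 < 1 - υ := by linarith
      have hμ : 0 < μ := hκ.trans_le hκμ
      rw [← mul_add, ← log_mul (by positivity) (by positivity)]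
      congr 2
      field_simp
  have merge_two : (1 - υ - κ) * log ((1 - υ) / (1 - υ - κ)) + (1 - υ - κ) * log 2 =
      (1 - υ - κ) * log (2 * (1 - υ) / (1 - υ - κ)) := by
    rcases (show 0 ≤ 1 - υ - κ by linarith).eq_or_lt with h | h
    · simp [← h]
    · have hs : 0 < 1 - υ := by linarith
      rw [← mul_add, ← log_mul (by positivity) two_ne_zero]
      congr 2
      ring
  rw [cutpathExponent]
  linear_combination (1 - υ) * binEnt_mul_log_two (κ / (1 - υ)) +
    κ * logb_two_mul_log_two (μ / (1 - υ)) + mul_binEntropy_div (1 - υ) κ + merge_κ + merge_two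

theorem cutpathExponent_mul_log_two_le {a : ℝ} (ha : 0 < a)
    (hκ : 0 ≤ κ) (hκμ : κ ≤ μ) (hκυ : κ + υ ≤ 1) :
    cutpathExponent μ κ υ * log 2 ≤ κ * (log a - 1) + μ / a + (1 - υ) * (2 / exp 1) := by
  have tangent_a : κ * log (μ / κ) ≤ κ * (log a - 1) + μ / a :=
    mul_log_div_le_tangent hκ (hκ.trans hκμ) (fun _ ↦ by linarith) ha
  have tangent_e : (1 - υ - κ) * log (2 * (1 - υ) / (1 - υ - κ)) ≤
      (1 - υ - κ) * (log (exp 1) - 1) + 2 * (1 - υ) / exp 1 :=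
    mul_log_div_le_tangent (by linarith) (by linarith) (fun _ ↦ by linarith) (exp_pos 1)
  rw [cutpathExponent_mul_log_two hκ hκμ hκυ]
  rw [log_exp] at tangent_e
  linear_combination tangent_a + tangent_e

theorem cutpathExponent_add_mul_log_two_le {μ' κ' υ' a c : ℝ}
    (ha : exp 1 ≤ a) (hslope : log a - 1 + 1 / a ≤ 2 / exp 1)
    (hκ : 0 ≤ κ) (hκμ : κ ≤ μ) (hκυ : κ + υ ≤ 1)
    (hκ' : 0 ≤ κ') (hκμ' : κ' ≤ μ') (hκυ' : κ' + υ' ≤ 1)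
    (hcross : κ + κ' ≤ υ + υ') (hzone : μ + μ' - υ - υ' ≤ c) :
    (cutpathExponent μ κ υ + cutpathExponent μ' κ' υ') * log 2 ≤ c / a + 4 / exp 1 := by
  have ha₀ : 0 < a := (exp_pos 1).trans_le ha
  have hlog : 0 ≤ log a - 1 := sub_nonneg.2 ((le_log_iff_exp_le ha₀).2 ha)
  calc (cutpathExponent μ κ υ + cutpathExponent μ' κ' υ') * log 2
      ≤ (κ + κ') * (log a - 1) + (μ + μ') / a + (2 - (υ + υ')) * (2 / exp 1) := by
        linear_combination cutpathExponent_mul_log_two_le ha₀ hκ hκμ hκυ +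
          cutpathExponent_mul_log_two_le ha₀ hκ' hκμ' hκυ'
    _ ≤ (υ + υ') * (log a - 1) + (c + (υ + υ')) / a + (2 - (υ + υ')) * (2 / exp 1) := by
        have hμ : μ + μ' ≤ c + (υ + υ') := by linarith
        gcongr
    _ = c / a + 4 / exp 1 + (υ + υ') * (log a - 1 + 1 / a - 2 / exp 1) := by ring
    _ ≤ c / a + 4 / exp 1 :=
        add_le_of_nonpos_right (mul_nonpos_of_nonneg_of_nonpos (by linarith) (by linarith))

end CutpathExponent

-- The root `a = 4.55496…` of `log a - 1 + 1 / a = 2 / e` gives the best bound; `4.554` suffices.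
theorem log_sub_one_add_one_div_le : log 4.554 - 1 + 1 / 4.554 ≤ 2 / exp 1 := by
  have hlog : log 1.1385 ≤ 0.1298 := by
    rw [log_le_iff_le_exp (by norm_num)]
    refine le_trans ?_ (sum_le_exp_of_nonneg (by norm_num) 5)
    norm_num [Finset.sum_range_succ, Nat.factorial]
  have hsplit : log 4.554 = 2 * log 2 + log 1.1385 := by
    rw [show (4.554 : ℝ) = 2 ^ 2 * 1.1385 by norm_num, log_mul (by norm_num) (by norm_num), log_pow]
    norm_num
  have hexp : 0.73575 ≤ 2 / exp 1 := by
    rw [le_div_iff₀ (exp_pos 1)]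
    linarith [exp_one_lt_d9]
  linarith [log_two_lt_d9]

theorem div_add_four_div_exp_one_lt : 3 / 2 / 4.554 + 4 / exp 1 < 2 * 1.2992 * log 2 := by
  have hexp : 4 / exp 1 ≤ 1.47152 := by
    rw [div_le_iff₀ (exp_pos 1)]
    linarith [exp_one_gt_d9]
  linarith [log_two_gt_d9]

theorem max_P_lt_general {μ μ' κ κ' υ υ' : ℝ}
    (hκ : 0 ≤ κ) (hκμ : κ ≤ μ) (hκυ : κ + υ ≤ 1)
    (hκ' : 0 ≤ κ') (hκμ' : κ' ≤ μ') (hκυ' : κ' + υ' ≤ 1)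
    (hcross : κ + κ' ≤ υ + υ') (hzone : μ + μ' - υ - υ' ≤ 3 / 2) :
    min (cutpathExponent μ κ υ) (cutpathExponent μ' κ' υ') < 1.2992 := by
  have hsum : (cutpathExponent μ κ υ + cutpathExponent μ' κ' υ') * log 2 < 2 * 1.2992 * log 2 :=
    (cutpathExponent_add_mul_log_two_le (by linarith [exp_one_lt_d9]) log_sub_one_add_one_div_le
      hκ hκμ hκυ hκ' hκμ' hκυ' hcross hzone).trans_lt div_add_four_div_exp_one_lt
  have hmean := lt_of_mul_lt_mul_right hsum (log_pos one_lt_two).le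
  exact min_lt_of_add_lt_two_nsmul (by rwa [nsmul_eq_mul, Nat.cast_ofNat])

theorem max_P_lt (μ μ' κ κ' υ υ' : ℝ)
    (hμ0 : 0 ≤ μ) (hμ1 : μ ≤ 1) (hμ'0 : 0 ≤ μ') (hμ'1 : μ' ≤ 1)
    (hκ0 : 0 ≤ κ) (hκμ : κ ≤ μ) (hκ'0 : 0 ≤ κ') (hκ'μ' : κ' ≤ μ')
    (hυ0 : 0 ≤ υ) (hκυ : κ + υ ≤ 1) (hυ'0 : 0 ≤ υ') (hκ'υ' : κ' + υ' ≤ 1)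
    (hκυ' : κ ≤ υ') (hκ'υ : κ' ≤ υ)
    (hzone : μ + μ' - υ - υ' ≤ 3 / 2) :
    min ((1 - υ) * binEnt (κ / (1 - υ)) + κ * Real.logb 2 (μ / (1 - υ)) + 1 - κ - υ)
        ((1 - υ') * binEnt (κ' / (1 - υ')) + κ' * Real.logb 2 (μ' / (1 - υ')) + 1 - κ' - υ')
      < 1.2992 :=
  max_P_lt_general hκ0 hκμ hκυ hκ'0 hκ'μ' hκ'υ' (by linarith) hzone
end

section
/- Let n, m, k, u, m', k', u' be natural numbers satisfying: k + u ≤ n, k ≤ m, m ≤ n, m' ≤ n, k' + u' ≤ n, k' ≤ m', k ≤ u', k' ≤ u, and 2(m + m') ≤ 3n + 2(u + u'). Then min{ (n-u choose k)·(m/(n-u))^k·2^{n-k-u} , (n-u' choose k')·(m'/(n-u'))^{k'}·2^{n-k'-u'} } ≤ 2^{1.2992·n}, where the quantities are real numbers, m/(n-u) denotes real division, and in the degenerate case u = n (forcing k = 0) the power (m/(n-u))^k is interpreted as 1 (similarly for u' = n). -/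
/-!
Since `min A B ≤ √(A * B)`, it suffices to bound the product of the two counts. For all `s, c > 0`,
the binomial theorem gives `choose N k * x ^ k ≤ s⁻¹ ^ k * (1 + s * x) ^ N`, and the tangent line of
the logarithm at `c` gives `1 + s * x ≤ c * exp ((1 + s * x) / c - 1)`. With `N = n - u` and
`x = m / N`, each count is thus at most the exponential of a linear form in `n`, `u`, `m`, `k`. In
the sum of the two exponents, `k + k' ≤ u + u'` eliminates `k + k'` and the zone inequality
eliminates `m + m'`; what is left is a multiple of `n` plus a multiple of `u + u'`. The values
`s = 8 / 27` and `c = 11 / 8`, close to the optimal ones, make the second coefficient nonpositive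
and the first one at most `2 * 1.2992 * log 2`.
-/

open Real

lemma min_le_of_mul_le_sq_of_nonneg {R : Type*} [Semiring R] [LinearOrder R] [IsStrictOrderedRing R]
    {a b c : R} (hc : 0 ≤ c) (hab : a * b ≤ c ^ 2) : min a b ≤ c := by
  by_contra! h
  obtain ⟨hca, hcb⟩ := lt_min_iff.1 h
  exact hab.not_gt (sq c ▸ mul_lt_mul'' hca hcb hc hc)

section ChooseMulPow

lemma choose_mul_pow_le_one_add_pow {R : Type*} [CommSemiring R] [PartialOrder R]
    [IsOrderedRing R] {x : R} (hx : 0 ≤ x) (n k : ℕ) :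
    (n.choose k : R) * x ^ k ≤ (1 + x) ^ n := by
  rcases lt_or_ge n k with hnk | hkn
  · simpa [Nat.choose_eq_zero_of_lt hnk] using pow_nonneg (add_nonneg zero_le_one hx) n
  · calc (n.choose k : R) * x ^ k = x ^ k * 1 ^ (n - k) * n.choose k := by
          rw [one_pow, mul_one, mul_comm]
      _ ≤ ∑ i ∈ Finset.range (n + 1), x ^ i * 1 ^ (n - i) * n.choose i :=
          Finset.single_le_sum (f := fun i ↦ x ^ i * 1 ^ (n - i) * (n.choose i : R))
            (fun i _ ↦ mul_nonneg (by simpa using pow_nonneg hx i) (Nat.cast_nonneg _))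
            (Finset.mem_range.2 (Nat.lt_succ_of_le hkn))
      _ = (1 + x) ^ n := by rw [← add_pow, add_comm]

lemma le_exp_log_add_div_sub_one {c : ℝ} (hc : 0 < c) (x : ℝ) :
    x ≤ exp (log c + (x / c - 1)) := by
  rw [exp_add, exp_log hc, ← div_le_iff₀' hc]
  linarith [add_one_le_exp (x / c - 1)]

variable {s c m : ℝ}

lemma choose_mul_div_pow_le_exp (hs : 0 < s) (hc : 0 < c) (hm : 0 ≤ m) (N k : ℕ) :
    (N.choose k : ℝ) * (m / N) ^ k ≤
      exp (N * (log c + 1 / c - 1) + s / c * m - k * log s) := by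
  set x : ℝ := m / N
  -- Only an inequality, because `x = 0` when `N = 0`.
  have hNx : N * x ≤ m := by
    rw [mul_div_left_comm]
    exact mul_le_of_le_one_right hm (div_self_le_one _)
  have hscaled : (N.choose k : ℝ) * (s * x) ^ k ≤ exp (N * (log c + ((1 + s * x) / c - 1))) :=
    calc (N.choose k : ℝ) * (s * x) ^ k ≤ (1 + s * x) ^ N :=
          choose_mul_pow_le_one_add_pow (by positivity) N k
      _ ≤ exp (log c + ((1 + s * x) / c - 1)) ^ N := by
          gcongr
          exact le_exp_log_add_div_sub_one hc _
      _ = exp (N * (log c + ((1 + s * x) / c - 1))) := (exp_nat_mul _ N).symm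
  calc (N.choose k : ℝ) * x ^ k = (N.choose k : ℝ) * (s * x) ^ k / s ^ k := by
        rw [mul_pow]
        field_simp
    _ ≤ exp (N * (log c + ((1 + s * x) / c - 1))) / s ^ k := by gcongr
    _ = exp (N * (log c + 1 / c - 1) + s / c * (N * x) - k * log s) := by
        rw [← exp_log hs, ← exp_nat_mul, ← exp_sub, exp_log hs]
        ring_nf
    _ ≤ exp (N * (log c + 1 / c - 1) + s / c * m - k * log s) := by gcongr

end ChooseMulPow

/-- The bound on the number of cutpaths of an arrangement of `n` pseudolines that is obtained by
viewing them from one of the two poles, where they take `u` unique exits and `k` of the `m` middle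
exits of the cells they visit. The number `m` is allowed to be real. -/
noncomputable def oneSidedBound (n : ℕ) (m : ℝ) (k u : ℕ) : ℝ :=
  ((n - u).choose k : ℝ) * (m / ((n : ℝ) - (u : ℝ))) ^ k * 2 ^ (n - k - u)

section OneSidedBound

variable {n k u k' u' : ℕ} {m m' s c : ℝ}

lemma oneSidedBound_nonneg (hm : 0 ≤ m) (hku : k + u ≤ n) : 0 ≤ oneSidedBound n m k u := by
  have hun : (0 : ℝ) ≤ n - u := sub_nonneg.2 (mod_cast le_of_add_le_right hku)
  unfold oneSidedBound
  positivity

lemma oneSidedBound_le_exp (hs : 0 < s) (hc : 0 < c) (hm : 0 ≤ m) (hku : k + u ≤ n) :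
    oneSidedBound n m k u ≤
      exp ((n - u) * (log (2 * c) + 1 / c - 1) + s / c * m - k * log (2 * s)) := by
  have hun : ((n - u : ℕ) : ℝ) = n - u := Nat.cast_sub (le_of_add_le_right hku)
  have hexponent : ((n - k - u : ℕ) : ℝ) = n - u - k := by
    rw [Nat.sub_sub, Nat.cast_sub hku, Nat.cast_add]
    ring
  have htwo : (2 : ℝ) ^ (n - k - u) = exp ((n - u - k) * log 2) := by
    rw [← hexponent, exp_nat_mul, exp_log two_pos]
  have hchoose := choose_mul_div_pow_le_exp hs hc hm (n - u) k
  rw [hun] at hchoose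
  calc oneSidedBound n m k u
      ≤ exp ((n - u) * (log c + 1 / c - 1) + s / c * m - k * log s) *
          exp ((n - u - k) * log 2) := by
        rw [oneSidedBound, htwo]
        gcongr
    _ = exp ((n - u) * (log (2 * c) + 1 / c - 1) + s / c * m - k * log (2 * s)) := by
        rw [← exp_add, log_mul two_ne_zero hc.ne', log_mul two_ne_zero hs.ne']
        ring_nf

lemma oneSidedBound_mul_le_exp (hs : 0 < s) (hs_half : 2 * s ≤ 1) (hc : 0 < c)
    (hsc : s / c - log (2 * s) ≤ log (2 * c) + 1 / c - 1)
    (hm : 0 ≤ m) (hm' : 0 ≤ m') (hku : k + u ≤ n) (hk'u' : k' + u' ≤ n)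
    (hexits : k + k' ≤ u + u') (hzone : 2 * (m + m') ≤ 3 * n + 2 * (u + u')) :
    oneSidedBound n m k u * oneSidedBound n m' k' u' ≤
      exp (n * (2 * (log (2 * c) + 1 / c - 1) + 3 / 2 * (s / c))) := by
  have hmiddle : s / c * (m + m') ≤ s / c * (3 / 2 * n + (u + u')) := by
    refine mul_le_mul_of_nonneg_left ?_ (by positivity)
    linarith
  have htaken : ((k : ℝ) + k') * -log (2 * s) ≤ (u + u') * -log (2 * s) := by
    have hlog : 0 ≤ -log (2 * s) := neg_nonneg.2 (log_nonpos (by positivity) hs_half)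
    gcongr ?_ * _
    exact_mod_cast hexits
  have hunique : ((u : ℝ) + u') * (s / c - log (2 * s)) ≤
      (u + u') * (log (2 * c) + 1 / c - 1) := by gcongr
  calc oneSidedBound n m k u * oneSidedBound n m' k' u'
      ≤ exp ((n - u) * (log (2 * c) + 1 / c - 1) + s / c * m - k * log (2 * s)) *
          exp ((n - u') * (log (2 * c) + 1 / c - 1) + s / c * m' - k' * log (2 * s)) :=
        mul_le_mul (oneSidedBound_le_exp hs hc hm hku) (oneSidedBound_le_exp hs hc hm' hk'u')
          (oneSidedBound_nonneg hm' hk'u') (exp_nonneg _)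
    _ ≤ exp (n * (2 * (log (2 * c) + 1 / c - 1) + 3 / 2 * (s / c))) := by
        rw [← exp_add, exp_le_exp]
        linarith

end OneSidedBound

lemma le_log_forty_four_div_twenty_seven : 145 / 297 ≤ log (44 / 27) := by
  rw [le_log_iff_exp_le (by norm_num)]
  refine (exp_bound' (by norm_num) (by norm_num) (n := 8) (by norm_num)).trans ?_
  norm_num [Finset.sum_range_succ, Nat.factorial]

lemma log_eleven_div_eight_le : log (11 / 8) ≤ 0.31849 := by
  rw [log_le_iff_le_exp (by norm_num)]
  refine le_trans ?_ (sum_le_exp_of_nonneg (by norm_num) 8)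
  norm_num [Finset.sum_range_succ, Nat.factorial]

lemma log_eleven_div_four_le : log (11 / 4) ≤ 1.2992 * log 2 + 1 / 9 := by
  have hsplit : log (11 / 4) = log 2 + log (11 / 8) := by
    rw [← log_mul (by norm_num) (by norm_num)]
    norm_num
  linarith [log_eleven_div_eight_le, log_two_gt_d9]

section CutpathCount

variable {n k u k' u' : ℕ} {m m' : ℝ}

lemma oneSidedBound_mul_le (hm : 0 ≤ m) (hm' : 0 ≤ m') (hku : k + u ≤ n) (hk'u' : k' + u' ≤ n)
    (hexits : k + k' ≤ u + u') (hzone : 2 * (m + m') ≤ 3 * n + 2 * (u + u')) :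
    oneSidedBound n m k u * oneSidedBound n m' k' u' ≤ ((2 : ℝ) ^ (1.2992 * n : ℝ)) ^ 2 := by
  have hsc : (8 / 27 : ℝ) / (11 / 8) - log (2 * (8 / 27)) ≤
      log (2 * (11 / 8)) + 1 / (11 / 8) - 1 := by
    have hlog : log (2 * (8 / 27)) + log (2 * (11 / 8)) = log (44 / 27) := by
      rw [← log_mul (by norm_num) (by norm_num)]
      norm_num
    linarith [le_log_forty_four_div_twenty_seven]
  have hrate : 2 * (log (2 * (11 / 8)) + 1 / (11 / 8) - 1) + 3 / 2 * ((8 / 27 : ℝ) / (11 / 8)) ≤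
      2 * (1.2992 * log 2) := by
    rw [show (2 : ℝ) * (11 / 8) = 11 / 4 by norm_num]
    linarith [log_eleven_div_four_le]
  calc oneSidedBound n m k u * oneSidedBound n m' k' u'
      ≤ exp (n * (2 * (log (2 * (11 / 8)) + 1 / (11 / 8) - 1) +
          3 / 2 * ((8 / 27 : ℝ) / (11 / 8)))) :=
        oneSidedBound_mul_le_exp (by norm_num) (by norm_num) (by norm_num) hsc hm hm' hku hk'u'
          hexits hzone
    _ ≤ exp (n * (2 * (1.2992 * log 2))) := by gcongr
    _ = ((2 : ℝ) ^ (1.2992 * n : ℝ)) ^ 2 := by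
        rw [rpow_def_of_pos two_pos, ← exp_nat_mul]
        push_cast
        ring_nf

theorem cutpath_count_bound_general (hm : 0 ≤ m) (hm' : 0 ≤ m') (hku : k + u ≤ n)
    (hk'u' : k' + u' ≤ n) (hexits : k + k' ≤ u + u')
    (hzone : 2 * (m + m') ≤ 3 * n + 2 * (u + u')) :
    min (oneSidedBound n m k u) (oneSidedBound n m' k' u') ≤ (2 : ℝ) ^ (1.2992 * n : ℝ) :=
  min_le_of_mul_le_sq_of_nonneg (by positivity)
    (oneSidedBound_mul_le hm hm' hku hk'u' hexits hzone)

end CutpathCount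

theorem cutpath_count_bound (n m k u m' k' u' : ℕ)
    (hku : k + u ≤ n) (hkm : k ≤ m) (hm : m ≤ n) (hm' : m' ≤ n)
    (hk'u' : k' + u' ≤ n) (hk'm' : k' ≤ m')
    (hku' : k ≤ u') (hk'u : k' ≤ u)
    (hzone : 2 * (m + m') ≤ 3 * n + 2 * (u + u')) :
    min (((n - u).choose k : ℝ) * ((m : ℝ) / ((n : ℝ) - (u : ℝ))) ^ k * 2 ^ (n - k - u))
        (((n - u').choose k' : ℝ) * ((m' : ℝ) / ((n : ℝ) - (u' : ℝ))) ^ k' * 2 ^ (n - k' - u'))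
      ≤ (2 : ℝ) ^ ((1.2992 : ℝ) * n) :=
  cutpath_count_bound_general m.cast_nonneg m'.cast_nonneg hku hk'u' (by omega)
    (by exact_mod_cast hzone)
end
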